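/- arXiv:1201.0697 — 2 statements merged into one kernel-verified Lean document; each statement's English description precedes it below -/
import Mathlib

section
/- For every integer r ≥ 1, the number of neighbor vertices of V(G_r) in the infinite hexagonal grid satisfies |𝒩(V(G_r))| = 6r. -/
/-- Adjacency of the infinite hexagonal grid `G∞` in brick-wall coordinates on `ℤ × ℤ`:
`(x,y)` and `(x',y')` are adjacent iff `y' = y` and `|x' - x| = 1`, or
`x' = x` and `|y' - y| = 1` and `x + min y y'` is even. -/
def hexAdj (v w : ℤ × ℤ) : Prop :=
  (v.2 = w.2 ∧ (v.1 - w.1).natAbs = 1) ∨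
  (v.1 = w.1 ∧ (v.2 - w.2).natAbs = 1 ∧ Even (v.1 + min v.2 w.2))

/-- The neighborhood `𝒩(W)`: vertices not in `W` adjacent to some vertex of `W`. -/
def hexNbhd (W : Set (ℤ × ℤ)) : Set (ℤ × ℤ) :=
  {v | v ∉ W ∧ ∃ w ∈ W, hexAdj v w}

/-- The boundary `ℬ(W)`: vertices of `W` adjacent to some vertex not in `W`. -/
def hexBdry (W : Set (ℤ × ℤ)) : Set (ℤ × ℤ) :=
  {v | v ∈ W ∧ ∃ w, w ∉ W ∧ hexAdj v w}

/-- The outgoing edges `ℰ(W)`, encoded as ordered pairs `(v, w)` with `v ∈ W`, `w ∉ W`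
and `v` adjacent to `w`; each edge with exactly one endpoint in `W` corresponds to
exactly one such pair. -/
def hexCutEdges (W : Set (ℤ × ℤ)) : Set ((ℤ × ℤ) × (ℤ × ℤ)) :=
  {p | p.1 ∈ W ∧ p.2 ∉ W ∧ hexAdj p.1 p.2}

/-- The hexagonal cell `C(a,b)`, with vertex set `{(2a+b+i, b+j) : i ∈ {0,1,2}, j ∈ {0,1}}`. -/
def hexCell (a b : ℤ) : Set (ℤ × ℤ) :=
  {(2*a+b, b), (2*a+b+1, b), (2*a+b+2, b),
   (2*a+b, b+1), (2*a+b+1, b+1), (2*a+b+2, b+1)}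

/-- The vertex set `V(G_r)` of the finite hexagonal grid of radius `r`: the union of the
cells `C(a,b)` with `(|a| + |b| + |a+b|)/2 ≤ r - 1`. -/
def gridVerts (r : ℕ) : Set (ℤ × ℤ) :=
  {v | ∃ a b : ℤ, a.natAbs + b.natAbs + (a+b).natAbs ≤ 2*(r-1) ∧ v ∈ hexCell a b}

/-- `𝒩_{G_r}(W)`: vertices of `V(G_r) \ W` adjacent to some vertex of `W`. -/
def hexNbhdIn (r : ℕ) (W : Set (ℤ × ℤ)) : Set (ℤ × ℤ) :=
  {v | v ∈ gridVerts r ∧ v ∉ W ∧ ∃ w ∈ W, hexAdj v w}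

/-- `ℬ_{G_r}(W)`: vertices of `W` adjacent to some vertex of `V(G_r) \ W`. -/
def hexBdryIn (r : ℕ) (W : Set (ℤ × ℤ)) : Set (ℤ × ℤ) :=
  {v | v ∈ W ∧ ∃ w, w ∈ gridVerts r ∧ w ∉ W ∧ hexAdj v w}

/-- `ℰ_{G_r}(W)`: the edges of `G_r` with exactly one endpoint in `W ⊆ V(G_r)`, encoded
as ordered pairs `(v, w)` with `v ∈ W`, `w ∈ V(G_r) \ W`, `v` adjacent to `w`. -/
def hexCutEdgesIn (r : ℕ) (W : Set (ℤ × ℤ)) : Set ((ℤ × ℤ) × (ℤ × ℤ)) :=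
  {p | p.1 ∈ W ∧ p.2 ∈ gridVerts r ∧ p.2 ∉ W ∧ hexAdj p.1 p.2}

/-- The index `ind_i(x,y)` of the direction-`i` row containing `(x,y)`
(directions numbered `0, 1, 2` for the paper's `1, 2, 3`):
`ind_1 = y`, `ind_2 = ⌊(y-x)/2⌋`, `ind_3 = ⌊(x+y)/2⌋`. -/
def rowInd : Fin 3 → ℤ × ℤ → ℤ
  | 0, v => v.2
  | 1, v => Int.fdiv (v.2 - v.1) 2
  | 2, v => Int.fdiv (v.1 + v.2) 2

/-- The linear parameter `p_i` along direction-`i` rows: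
`p_1 = x`, `p_2 = x + y`, `p_3 = x - y`. -/
def rowParam : Fin 3 → ℤ × ℤ → ℤ
  | 0, v => v.1
  | 1, v => v.1 + v.2
  | 2, v => v.1 - v.2

/-- A set of integers is consecutive if it contains every integer between any two of
its elements. -/
def ConsecutiveSet (S : Set ℤ) : Prop :=
  ∀ a ∈ S, ∀ b ∈ S, ∀ k : ℤ, a ≤ k → k ≤ b → k ∈ S

/-- `v` is an outermost neighbor of `W` for direction `i`: the direction-`i` row of `v`
is gray, and the parameter of `v` is `m - 1` or `M + 1`, where `m` and `M` are the
minimum and maximum of the parameter over `W` intersected with that row. -/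
def IsOutermostNeighbor (W : Set (ℤ × ℤ)) (i : Fin 3) (v : ℤ × ℤ) : Prop :=
  (rowParam i v + 1 ∈ rowParam i '' {w ∈ W | rowInd i w = rowInd i v} ∧
    ∀ q ∈ rowParam i '' {w ∈ W | rowInd i w = rowInd i v}, rowParam i v + 1 ≤ q) ∨
  (rowParam i v - 1 ∈ rowParam i '' {w ∈ W | rowInd i w = rowInd i v} ∧
    ∀ q ∈ rowParam i '' {w ∈ W | rowInd i w = rowInd i v}, q ≤ rowParam i v - 1)

/-- In brick-wall coordinates, `V(G_r)` is cut out by linear inequalities. -/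
lemma mem_gridVerts_iff {r : ℕ} (hr : 1 ≤ r) (x y : ℤ) :
    (x, y) ∈ gridVerts r ↔
      1 - (r : ℤ) ≤ y ∧ y ≤ r ∧ (x - 1).natAbs ≤ 2 * r - 1 - max (y - 1) (-y) := by
  simp only [gridVerts, hexCell, Set.mem_ofPred_eq, Set.mem_insert_iff, Set.mem_singleton_iff,
    Prod.mk.injEq]
  constructor
  · rintro ⟨a, b, h, hv⟩
    omega
  · rintro ⟨h₁, h₂, h₃⟩
    obtain ⟨b, hb⟩ : ∃ b : ℤ, (1 ≤ y ∧ b = y - 1) ∨ (y ≤ 0 ∧ b = y) := by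
      by_cases hy : 1 ≤ y
      · exact ⟨y - 1, by omega⟩
      · exact ⟨y, by omega⟩
    by_cases hx : x - 1 = 2 * r - 1 - max (y - 1) (-y)
    · exact ⟨(x - b) / 2 - 1, b, by omega, by omega⟩
    · exact ⟨(x - b) / 2, b, by omega, by omega⟩

/-- The neighbors of `V(G_r)` are the two vertices flanking each row, together with every other
vertex above the top row and below the bottom row. -/
lemma mem_hexNbhd_gridVerts_iff {r : ℕ} (hr : 1 ≤ r) (x y : ℤ) :
    (x, y) ∈ hexNbhd (gridVerts r) ↔
      (1 - (r : ℤ) ≤ y ∧ y ≤ r ∧ (x - 1).natAbs = 2 * r - max (y - 1) (-y)) ∨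
      ((y = r + 1 ∨ y = -r) ∧ (x - 1).natAbs ≤ r ∧ Even (x + r)) := by
  simp only [hexNbhd, hexAdj, Set.mem_ofPred_eq, Prod.exists, mem_gridVerts_iff hr,
    Int.even_iff]
  constructor
  · rintro ⟨hv, a, b, hw, h⟩
    omega
  · rintro (⟨h₁, h₂, h₃⟩ | ⟨rfl | rfl, h₂, h₃⟩)
    · refine ⟨by omega, ?_⟩
      by_cases hx : 1 ≤ x
      · exact ⟨x - 1, y, by omega, by omega⟩
      · exact ⟨x + 1, y, by omega, by omega⟩
    · exact ⟨by omega, x, r, by omega, by omega⟩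
    · exact ⟨by omega, x, 1 - r, by omega, by omega⟩

/-- For every `r ≥ 1`, `|𝒩(V(G_r))| = 6r`. -/
theorem card_nbhd_gridVerts (r : ℕ) (hr : 1 ≤ r) :
    (hexNbhd (gridVerts r)).ncard = 6*r := by
  let side (s : ℤ) : Finset (ℤ × ℤ) :=
    (Finset.Icc (1 - (r : ℤ)) r).image fun y ↦ (1 + s * (2 * r - max (y - 1) (-y)), y)
  let cap (y : ℤ) : Finset (ℤ × ℤ) :=
    (Finset.range r).image fun k : ℕ ↦ (2 - (r : ℤ) + 2 * k, y)
  have card_side (s : ℤ) : (side s).card = 2 * r := by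
    rw [Finset.card_image_of_injective _ fun a b h ↦ (Prod.mk.inj h).2, Int.card_Icc]
    omega
  have card_cap (y : ℤ) : (cap y).card = r := by
    rw [Finset.card_image_of_injective, Finset.card_range]
    intro a b h
    have := (Prod.mk.inj h).1
    omega
  have disjoint_sides : Disjoint (side 1) (side (-1)) := by
    simp only [side, Finset.disjoint_left, Finset.mem_image, Finset.mem_Icc, Prod.forall,
      Prod.mk.injEq]
    rintro x y ⟨z, hz, h⟩ ⟨w, hw, h'⟩
    omega
  have disjoint_caps : Disjoint (cap (r + 1)) (cap (-r)) := by
    simp only [cap, Finset.disjoint_left, Finset.mem_image, Finset.mem_range, Prod.forall,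
      Prod.mk.injEq]
    rintro x y ⟨k, hk, h⟩ ⟨l, hl, h'⟩
    omega
  have disjoint_sides_caps :
      Disjoint (side 1 ∪ side (-1)) (cap (r + 1) ∪ cap (-r)) := by
    simp only [side, cap, Finset.disjoint_left, Finset.mem_union, Finset.mem_image,
      Finset.mem_range, Finset.mem_Icc, Prod.forall, Prod.mk.injEq]
    rintro x y (⟨z, hz, h⟩ | ⟨z, hz, h⟩) (⟨k, hk, h'⟩ | ⟨k, hk, h'⟩) <;> omega
  have nbhd_eq : hexNbhd (gridVerts r) =
      ↑((side 1 ∪ side (-1)) ∪ (cap (r + 1) ∪ cap (-r))) := by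
    ext ⟨x, y⟩
    simp only [mem_hexNbhd_gridVerts_iff hr, side, cap, Finset.mem_coe, Finset.mem_union,
      Finset.mem_image, Finset.mem_range, Finset.mem_Icc, Prod.mk.injEq, Int.even_iff]
    constructor
    · rintro (⟨h₁, h₂, h₃⟩ | ⟨rfl | rfl, h₂, h₃⟩)
      · by_cases hx : 1 ≤ x
        · exact .inl (.inl ⟨y, by omega, by omega, rfl⟩)
        · exact .inl (.inr ⟨y, by omega, by omega, rfl⟩)
      · exact .inr (.inl ⟨((x + r - 2) / 2).toNat, by omega, by omega, rfl⟩)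
      · exact .inr (.inr ⟨((x + r - 2) / 2).toNat, by omega, by omega, rfl⟩)
    · rintro ((⟨z, hz, h⟩ | ⟨z, hz, h⟩) | (⟨k, hk, h⟩ | ⟨k, hk, h⟩)) <;> omega
  rw [nbhd_eq, Set.ncard_coe_finset, Finset.card_union_of_disjoint disjoint_sides_caps,
    Finset.card_union_of_disjoint disjoint_sides, Finset.card_union_of_disjoint disjoint_caps]
  simp only [card_side, card_cap]
  omega
end

section
/- For every finite nonempty subset W of the vertices of the infinite hexagonal grid G∞, there exists a finite subset W' of vertices of G∞ with |W'| = |W|, |𝒩(W')| ≤ |𝒩(W)|, and such that W' has no bad rows in any of the three directions, i.e. for each i ∈ {1,2,3} the index set I_i(W') = {ind_i(w) : w ∈ W'} is a set of consecutive integers. -/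
theorem hexAdj_add_iff {t : ℤ × ℤ} (ht : Even (t.1 + t.2)) (v w : ℤ × ℤ) :
    hexAdj (v + t) (w + t) ↔ hexAdj v w := by
  have h1 : v.1 + t.1 + min (v.2 + t.2) (w.2 + t.2)
      = (v.1 + min v.2 w.2) + (t.1 + t.2) := by
    rw [min_add_add_right]; ring
  simp only [hexAdj, Prod.fst_add, Prod.snd_add, add_sub_add_right_eq_sub, add_left_inj, h1,
    Int.even_add.trans (iff_true_right ht)]

theorem hexNbhd_image_add {t : ℤ × ℤ} (ht : Even (t.1 + t.2)) (W : Set (ℤ × ℤ)) :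
    hexNbhd ((· + t) '' W) = (· + t) '' hexNbhd W := by
  ext v
  obtain ⟨v, rfl⟩ : ∃ u, v = u + t := ⟨v - t, by simp⟩
  have hmem : ∀ (S : Set (ℤ × ℤ)) u, u + t ∈ (· + t) '' S ↔ u ∈ S :=
    fun S u => (add_left_injective t).mem_set_image
  rw [hmem]
  change v + t ∉ _ ∧ _ ↔ v ∉ W ∧ _
  rw [hmem, Set.exists_mem_image]
  simp only [hexAdj_add_iff ht]

theorem finite_hexNbhd {W : Set (ℤ × ℤ)} (hW : W.Finite) : (hexNbhd W).Finite := by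
  refine (hW.biUnion (t := fun w => Set.Icc (w - 1) (w + 1))
    fun w _ => Set.finite_Icc _ _).subset ?_
  rintro v ⟨-, w, hw, hvw⟩
  simp only [Set.mem_iUnion, Set.mem_Icc, Prod.le_def, exists_prop]
  refine ⟨w, hw, ?_⟩
  simp only [hexAdj] at hvw
  simp only [Prod.fst_sub, Prod.snd_sub, Prod.fst_add, Prod.snd_add, Prod.fst_one, Prod.snd_one]
  omega

theorem hexNbhd_union_subset (U L : Set (ℤ × ℤ)) :
    hexNbhd (U ∪ L) ⊆ hexNbhd U ∪ hexNbhd L := by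
  rintro v ⟨hv, w, hw | hw, hvw⟩
  · exact Or.inl ⟨fun h => hv (Or.inl h), w, hw, hvw⟩
  · exact Or.inr ⟨fun h => hv (Or.inr h), w, hw, hvw⟩

theorem rowInd_one (v : ℤ × ℤ) : rowInd 1 v = (v.2 - v.1) / 2 :=
  Int.fdiv_eq_ediv_of_nonneg _ (by norm_num)

theorem rowInd_two (v : ℤ × ℤ) : rowInd 2 v = (v.1 + v.2) / 2 :=
  Int.fdiv_eq_ediv_of_nonneg _ (by norm_num)

theorem hexAdj.rowInd_le {v w : ℤ × ℤ} (h : hexAdj v w) (i : Fin 3) :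
    rowInd i v ≤ rowInd i w + 1 ∧ rowInd i w ≤ rowInd i v + 1 := by
  simp only [hexAdj, Int.even_iff] at h
  fin_cases i
  · change v.2 ≤ w.2 + 1 ∧ w.2 ≤ v.2 + 1
    omega
  · change rowInd 1 v ≤ rowInd 1 w + 1 ∧ rowInd 1 w ≤ rowInd 1 v + 1
    simp only [rowInd_one]
    omega
  · change rowInd 2 v ≤ rowInd 2 w + 1 ∧ rowInd 2 w ≤ rowInd 2 v + 1
    simp only [rowInd_two]
    omega

/-- Each vertex has only one edge leaving its direction-`i` row. -/
theorem rowInd_le_of_common_neighbor {v u l : ℤ × ℤ} (hu : hexAdj v u) (hl : hexAdj v l)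
    (i : Fin 3) : rowInd i u ≤ rowInd i l + 1 := by
  simp only [hexAdj, Int.even_iff] at hu hl
  fin_cases i
  · change u.2 ≤ l.2 + 1
    omega
  · change rowInd 1 u ≤ rowInd 1 l + 1
    simp only [rowInd_one]
    omega
  · change rowInd 2 u ≤ rowInd 2 l + 1
    simp only [rowInd_two]
    omega

/-- Two sets separated by an empty row have disjoint neighborhoods, whose sizes add up. -/
theorem ncard_hexNbhd_union_of_separated {U L : Set (ℤ × ℤ)} (hU : U.Finite) (hL : L.Finite)
    (i : Fin 3) (h : ∀ u ∈ U, ∀ l ∈ L, rowInd i l + 2 ≤ rowInd i u) :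
    (hexNbhd (U ∪ L)).ncard = (hexNbhd U).ncard + (hexNbhd L).ncard := by
  rw [← Set.ncard_union_eq _ (finite_hexNbhd hU) (finite_hexNbhd hL)]
  · congr 1
    refine (hexNbhd_union_subset U L).antisymm ?_
    rintro v (⟨hv, w, hw, hvw⟩ | ⟨hv, w, hw, hvw⟩)
    · refine ⟨?_, w, Or.inl hw, hvw⟩
      rintro (h' | h')
      · exact hv h'
      · have := h w hw v h'
        have := hvw.rowInd_le i
        omega
    · refine ⟨?_, w, Or.inr hw, hvw⟩
      rintro (h' | h')
      · have := h v h' w hw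
        have := hvw.rowInd_le i
        omega
      · exact hv h'
  · rw [Set.disjoint_left]
    rintro v ⟨-, u, hu, hvu⟩ ⟨-, l, hl, hvl⟩
    have := h u hu l hl
    have := rowInd_le_of_common_neighbor hvu hvl i
    omega

/-- A positive definite quadratic form for which all shortest translations of the grid have
the same length. -/
def hexForm (d : ℤ × ℤ) : ℤ := d.1 ^ 2 + 3 * d.2 ^ 2

theorem hexForm_nonneg (d : ℤ × ℤ) : 0 ≤ hexForm d := by
  unfold hexForm
  positivity

theorem hexForm_neg (d : ℤ × ℤ) : hexForm (-d) = hexForm d := by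
  simp [hexForm]

/-- The total `hexForm`-energy of all ordered pairs of points of `W`. -/
def hexEnergy (W : Finset (ℤ × ℤ)) : ℤ := ∑ p ∈ W, ∑ q ∈ W, hexForm (p - q)

theorem hexEnergy_nonneg (W : Finset (ℤ × ℤ)) : 0 ≤ hexEnergy W :=
  Finset.sum_nonneg fun _ _ => Finset.sum_nonneg fun _ _ => hexForm_nonneg _

theorem hexEnergy_union {U L : Finset (ℤ × ℤ)} (h : Disjoint U L) :
    hexEnergy (U ∪ L) =
      hexEnergy U + hexEnergy L + 2 * ∑ u ∈ U, ∑ l ∈ L, hexForm (u - l) := by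
  have hswap : ∑ l ∈ L, ∑ u ∈ U, hexForm (l - u) = ∑ u ∈ U, ∑ l ∈ L, hexForm (u - l) := by
    rw [Finset.sum_comm]
    refine Finset.sum_congr rfl fun u _ => Finset.sum_congr rfl fun l _ => ?_
    rw [← hexForm_neg, neg_sub]
  simp only [hexEnergy, Finset.sum_union h, Finset.sum_add_distrib, hswap]
  ring

theorem hexEnergy_map_add (U : Finset (ℤ × ℤ)) (t : ℤ × ℤ) :
    hexEnergy (U.map (addRightEmbedding t)) = hexEnergy U := by
  simp [hexEnergy]

/-- In every direction there are two translations lowering the row index by one that,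
on average, bring vertices at least two rows apart closer together. -/
theorem exists_translations (i : Fin 3) : ∃ s t : ℤ × ℤ,
    (Even (s.1 + s.2) ∧ ∀ v, rowInd i (v + s) = rowInd i v - 1) ∧
    (Even (t.1 + t.2) ∧ ∀ v, rowInd i (v + t) = rowInd i v - 1) ∧
    ∀ u l, rowInd i l + 2 ≤ rowInd i u →
      hexForm (u + s - l) + hexForm (u + t - l) < 2 * hexForm (u - l) := by
  fin_cases i
  · refine ⟨(1, -1), (-1, -1), ⟨by decide, fun v => rfl⟩, ⟨by decide, fun v => rfl⟩,
      fun u l h => ?_⟩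
    change l.2 + 2 ≤ u.2 at h
    simp only [hexForm, Prod.fst_sub, Prod.snd_sub, Prod.fst_add, Prod.snd_add]
    linarith
  · change ∃ s t : ℤ × ℤ,
      (Even (s.1 + s.2) ∧ ∀ v, rowInd 1 (v + s) = rowInd 1 v - 1) ∧
      (Even (t.1 + t.2) ∧ ∀ v, rowInd 1 (v + t) = rowInd 1 v - 1) ∧
      ∀ u l, rowInd 1 l + 2 ≤ rowInd 1 u →
        hexForm (u + s - l) + hexForm (u + t - l) < 2 * hexForm (u - l)
    simp only [rowInd_one, hexForm, Prod.fst_sub, Prod.snd_sub, Prod.fst_add, Prod.snd_add]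
    refine ⟨(1, -1), (2, 0), ⟨by decide, fun v => by dsimp only; omega⟩,
      ⟨by decide, fun v => by dsimp only; omega⟩, fun u l h => ?_⟩
    have h' : l.2 - l.1 + 3 ≤ u.2 - u.1 := by omega
    linarith
  · change ∃ s t : ℤ × ℤ,
      (Even (s.1 + s.2) ∧ ∀ v, rowInd 2 (v + s) = rowInd 2 v - 1) ∧
      (Even (t.1 + t.2) ∧ ∀ v, rowInd 2 (v + t) = rowInd 2 v - 1) ∧
      ∀ u l, rowInd 2 l + 2 ≤ rowInd 2 u →
        hexForm (u + s - l) + hexForm (u + t - l) < 2 * hexForm (u - l)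
    simp only [rowInd_two, hexForm, Prod.fst_sub, Prod.snd_sub, Prod.fst_add, Prod.snd_add]
    refine ⟨(-1, -1), (-2, 0), ⟨by decide, fun v => by dsimp only; omega⟩,
      ⟨by decide, fun v => by dsimp only; omega⟩, fun u l h => ?_⟩
    have h' : l.1 + l.2 + 3 ≤ u.1 + u.2 := by omega
    linarith

/-- If two sets are separated by an empty row, one of them can be translated towards the other
so that the energy drops. -/
theorem exists_translate_hexEnergy_lt {U L : Finset (ℤ × ℤ)} (hU : U.Nonempty)
    (hL : L.Nonempty) (i : Fin 3) (h : ∀ u ∈ U, ∀ l ∈ L, rowInd i l + 2 ≤ rowInd i u) :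
    ∃ t : ℤ × ℤ, Even (t.1 + t.2) ∧ Disjoint (U.map (addRightEmbedding t)) L ∧
      hexEnergy (U.map (addRightEmbedding t) ∪ L) < hexEnergy (U ∪ L) := by
  obtain ⟨s, t, ⟨hs, hs'⟩, ⟨ht, ht'⟩, hst⟩ := exists_translations i
  have hdisj : ∀ r : ℤ × ℤ, (∀ v, rowInd i (v + r) = rowInd i v - 1) →
      Disjoint (U.map (addRightEmbedding r)) L := by
    intro r hr
    rw [Finset.disjoint_left]
    intro v hv hvL
    obtain ⟨u, hu, rfl⟩ := Finset.mem_map.1 hv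
    have h1 := h u hu _ hvL
    rw [addRightEmbedding_apply, hr u] at h1
    omega
  have hUL : Disjoint U L := by
    rw [Finset.disjoint_left]
    intro v hv hvL
    have := h v hv v hvL
    omega
  have hsum : ∑ u ∈ U, ∑ l ∈ L, (hexForm (u + s - l) + hexForm (u + t - l)) <
      ∑ u ∈ U, ∑ l ∈ L, 2 * hexForm (u - l) :=
    Finset.sum_lt_sum_of_nonempty hU fun u hu =>
      Finset.sum_lt_sum_of_nonempty hL fun l hl => hst u l (h u hu l hl)
  simp only [Finset.sum_add_distrib, ← Finset.mul_sum] at hsum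
  by_cases hlt : ∑ u ∈ U, ∑ l ∈ L, hexForm (u + s - l) < ∑ u ∈ U, ∑ l ∈ L, hexForm (u - l)
  · refine ⟨s, hs, hdisj s hs', ?_⟩
    rw [hexEnergy_union (hdisj s hs'), hexEnergy_union hUL, hexEnergy_map_add, Finset.sum_map]
    simp only [addRightEmbedding_apply]
    linarith
  · refine ⟨t, ht, hdisj t ht', ?_⟩
    rw [hexEnergy_union (hdisj t ht'), hexEnergy_union hUL, hexEnergy_map_add, Finset.sum_map]
    simp only [addRightEmbedding_apply]
    linarith

theorem exists_hexEnergy_lt_of_not_consecutive (W : Finset (ℤ × ℤ)) (i : Fin 3)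
    (h : ¬ ConsecutiveSet (rowInd i '' (W : Set (ℤ × ℤ)))) :
    ∃ W' : Finset (ℤ × ℤ), W'.card = W.card ∧
      (hexNbhd (W' : Set (ℤ × ℤ))).ncard ≤ (hexNbhd (W : Set (ℤ × ℤ))).ncard ∧
      hexEnergy W' < hexEnergy W := by
  simp only [ConsecutiveSet, not_forall] at h
  obtain ⟨_, ⟨a, ha, rfl⟩, _, ⟨b, hb, rfl⟩, k, hak, hkb, hk⟩ := h
  have hne : ∀ w ∈ W, rowInd i w ≠ k := fun w hw hwk => hk ⟨w, hw, hwk⟩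
  have hak' := hne a ha
  have hbk' := hne b hb
  obtain ⟨U, hU⟩ : ∃ U, U = W.filter fun w => k < rowInd i w := ⟨_, rfl⟩
  obtain ⟨L, hL⟩ : ∃ L, L = W.filter fun w => ¬ k < rowInd i w := ⟨_, rfl⟩
  have hW : U ∪ L = W := by rw [hU, hL, Finset.filter_union_filter_not_eq]
  have hUL : Disjoint U L := by rw [hU, hL]; exact Finset.disjoint_filter_filter_not _ _ _
  have hsep : ∀ u ∈ U, ∀ l ∈ L, rowInd i l + 2 ≤ rowInd i u := by
    intro u hu l hl
    rw [hU, Finset.mem_filter] at hu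
    rw [hL, Finset.mem_filter] at hl
    have := hne l hl.1
    omega
  obtain ⟨t, ht, hdisj, hlt⟩ := exists_translate_hexEnergy_lt
    ⟨b, by rw [hU, Finset.mem_filter]; exact ⟨hb, by omega⟩⟩
    ⟨a, by rw [hL, Finset.mem_filter]; exact ⟨ha, by omega⟩⟩ i hsep
  rw [← hW]
  refine ⟨_, ?_, ?_, hlt⟩
  · rw [Finset.card_union_of_disjoint hdisj, Finset.card_union_of_disjoint hUL,
      Finset.card_map]
  · rw [Finset.coe_union U, ncard_hexNbhd_union_of_separated U.finite_toSet L.finite_toSet i hsep,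
      Finset.coe_union, Finset.coe_map]
    change (hexNbhd ((· + t) '' (U : Set (ℤ × ℤ)) ∪ L)).ncard ≤ _
    have hfin : (hexNbhd ((· + t) '' (U : Set (ℤ × ℤ)))).Finite :=
      finite_hexNbhd (U.finite_toSet.image _)
    refine (Set.ncard_le_ncard (hexNbhd_union_subset _ _)
      (hfin.union (finite_hexNbhd L.finite_toSet))).trans
      ((Set.ncard_union_le _ _).trans_eq ?_)
    rw [hexNbhd_image_add ht, Set.ncard_image_of_injective _ (add_left_injective t)]

theorem exists_no_bad_rows (W : Finset (ℤ × ℤ)) :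
    ∃ W' : Finset (ℤ × ℤ), W'.card = W.card ∧
      (hexNbhd (W' : Set (ℤ × ℤ))).ncard ≤ (hexNbhd (W : Set (ℤ × ℤ))).ncard ∧
      ∀ i : Fin 3, ConsecutiveSet (rowInd i '' (W' : Set (ℤ × ℤ))) := by
  induction hn : (hexEnergy W).toNat using Nat.strong_induction_on generalizing W with
  | _ n ih =>
    by_cases hW : ∀ i : Fin 3, ConsecutiveSet (rowInd i '' (W : Set (ℤ × ℤ)))
    · exact ⟨W, rfl, le_rfl, hW⟩
    · obtain ⟨i, hi⟩ := not_forall.1 hW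
      obtain ⟨V, hcard, hnbhd, hlt⟩ := exists_hexEnergy_lt_of_not_consecutive W i hi
      have hV := hexEnergy_nonneg V
      obtain ⟨W', hcard', hnbhd', hW'⟩ := ih (hexEnergy V).toNat (by omega) V rfl
      exact ⟨W', hcard'.trans hcard, hnbhd'.trans hnbhd, hW'⟩

/-- Every finite nonempty vertex set `W` can be replaced by a set `W'` of the same
cardinality, with at most as many neighbor vertices, and with no bad rows in any of the
three directions (each index set `I_i(W')` is a set of consecutive integers). -/
theorem eliminate_bad_rows (W : Set (ℤ × ℤ)) (hW : W.Finite) (hne : W.Nonempty) :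
    ∃ W' : Set (ℤ × ℤ), W'.Finite ∧ W'.ncard = W.ncard ∧
      (hexNbhd W').ncard ≤ (hexNbhd W).ncard ∧
      ∀ i : Fin 3, ConsecutiveSet (rowInd i '' W') := by
  obtain ⟨W', hcard, hnbhd, hW'⟩ := exists_no_bad_rows hW.toFinset
  rw [hW.coe_toFinset] at hnbhd
  refine ⟨W', W'.finite_toSet, ?_, hnbhd, hW'⟩
  rw [Set.ncard_coe_finset, hcard, Set.ncard_eq_toFinset_card W hW]
end
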